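/- Let X ⊆ P² be a k-configuration of type (1,2,…,s) with s ≥ 2, and suppose there are exactly s + 1 lines in P² containing exactly s points of X. Then for every integer m ≥ 2, ΔH_{mX}(m·s − 1) = s + 1. -/

import Mathlib

/-- The projective plane over a field `K`, as the projectivization of `K³`. -/
abbrev P2 (K : Type) [Field K] := Projectivization K (Fin 3 → K)

/-- A line in `P2 K`: a 2-dimensional linear subspace of `K³`. -/
structure ProjLine (K : Type) [Field K] where
  toSubmodule : Submodule K (Fin 3 → K)
  finrank_eq_two : Module.finrank K toSubmodule = 2

/-- The set of points of `P2 K` lying on a line. -/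
def ProjLine.points {K : Type} [Field K] (L : ProjLine K) : Set (P2 K) :=
  {p | p.submodule ≤ L.toSubmodule}

/-- The homogeneous prime ideal of a point of `P2 K`: the ideal generated by
the linear forms vanishing at the point. -/
noncomputable def pointIdeal {K : Type} [Field K] (p : P2 K) :
    Ideal (MvPolynomial (Fin 3) K) :=
  Ideal.span {f | f.IsHomogeneous 1 ∧ MvPolynomial.eval p.rep f = 0}

/-- The defining ideal `I_{mX} = ⋂_{P ∈ X} I_P^m` of the fat point scheme `mX`. -/
noncomputable def fatIdeal {K : Type} [Field K] (X : Set (P2 K)) (m : ℕ) :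
    Ideal (MvPolynomial (Fin 3) K) :=
  ⨅ p ∈ X, (pointIdeal p) ^ m

/-- The Hilbert function of `R/I`: `H(t) = dim_K R_t - dim_K I_t`. -/
noncomputable def hilb {K : Type} [Field K] (I : Ideal (MvPolynomial (Fin 3) K)) (t : ℕ) : ℕ :=
  Module.finrank K ↥(MvPolynomial.homogeneousSubmodule (Fin 3) K t) -
    Module.finrank K ↥(Submodule.restrictScalars K (I : Submodule (MvPolynomial (Fin 3) K) (MvPolynomial (Fin 3) K)) ⊓ MvPolynomial.homogeneousSubmodule (Fin 3) K t)

/-- The Hilbert function extended to `ℤ`, with `H(t) = 0` for `t < 0`. -/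
noncomputable def hilbZ {K : Type} [Field K] (I : Ideal (MvPolynomial (Fin 3) K)) (t : ℤ) : ℤ :=
  if t < 0 then 0 else hilb I t.toNat

/-- The first difference `ΔH(t) = H(t) - H(t-1)` of the Hilbert function. -/
noncomputable def deltaHilb {K : Type} [Field K] (I : Ideal (MvPolynomial (Fin 3) K)) (t : ℤ) : ℤ :=
  hilbZ I t - hilbZ I (t - 1)

/-- `X` is a k-configuration of type `(d 0, …, d (s-1))` defined using the subsets
`Xs 0, …, Xs (s-1)` and the (distinct) lines `Ls 0, …, Ls (s-1)`. -/
structure IsKConfig {K : Type} [Field K] {s : ℕ} (X : Set (P2 K)) (d : Fin s → ℕ)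
    (Xs : Fin s → Set (P2 K)) (Ls : Fin s → ProjLine K) : Prop where
  one_le : ∀ i, 1 ≤ d i
  strictMono : StrictMono d
  lines_distinct : Function.Injective Ls
  union_eq : X = ⋃ i, Xs i
  card_eq : ∀ i, (Xs i).ncard = d i
  subset_line : ∀ i, Xs i ⊆ (Ls i).points
  not_mem : ∀ i j : Fin s, j < i → ∀ p ∈ Xs j, p ∉ (Ls i).points

/-!
Double counting the at least `s (s + 1)` incidences between the `s + 1` lines and the
`s (s + 1) / 2` points shows that every point lies on exactly two of the lines and that any two of
the lines meet in a point of `X`: the set `X` is a star configuration.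

Each of the lines contains at least `s` points of `X`, so by Bézout a form of degree less than
`m s` in `I_{mX}` is divisible by the product of the `s + 1` lines. Dividing by this product lowers
all multiplicities by two, whence `ΔH_{mX}(m s - 1) = (s + 1) + ΔH_{(m-2)X}((m - 1) s - 2)`. The
last term vanishes: modulo a linear form vanishing at no point of `X`, the `s + 1` products of `s`
of the lines span the forms of degree `s`, hence `ΔH_{nX}(t) = 0` for all `t ≥ n s`.
-/

open MvPolynomial

section LinearForms

variable {σ R K : Type*} [CommRing R] [Field K]

theorem aeval_smul_of_isHomogeneous {S : Type*} [CommRing S] [Algebra R S] {f : MvPolynomial σ R}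
    {n : ℕ} (hf : f.IsHomogeneous n) (p : σ → R) (a : S) :
    aeval (fun i ↦ p i • a) f = eval p f • a ^ n := by
  rw [aeval_def, eval₂_eq, eval_eq, Finset.sum_smul]
  refine Finset.sum_congr rfl fun d hd ↦ ?_
  have hdeg : d.degree = n := not_imp_comm.mp hf.coeff_eq_zero (mem_support_iff.mp hd)
  rw [← hdeg]
  simp only [smul_pow, Finset.prod_smul, Finset.prod_pow_eq_pow_sum, ← Finsupp.degree_apply,
    mul_smul, Algebra.smul_def (f.coeff d)]

variable [Fintype σ]

/-- The linear form `∑ i, c i * X i` with coefficient vector `c`, as a linear map in `c`. -/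
noncomputable def linearForm : (σ → R) →ₗ[R] MvPolynomial σ R :=
  Fintype.linearCombination R X

theorem linearForm_apply (c : σ → R) : linearForm c = ∑ i, C (c i) * X i := by
  simp [linearForm, Fintype.linearCombination_apply, smul_eq_C_mul]

theorem eval_linearForm (c v : σ → R) : eval v (linearForm c) = c ⬝ᵥ v := by
  simp [linearForm_apply, dotProduct]

theorem isHomogeneous_linearForm (c : σ → R) : (linearForm c).IsHomogeneous 1 :=
  linearForm_apply c ▸ .sum _ _ _ fun _ _ ↦ isHomogeneous_C_mul_X _ _

theorem exists_eq_linearForm {f : MvPolynomial σ R}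
    (hf : f.IsHomogeneous 1) : ∃ c, f = linearForm c := by
  rw [← mem_homogeneousSubmodule, homogeneousSubmodule_one_eq_span_X,
    Submodule.mem_span_range_iff_exists_fun] at hf
  obtain ⟨c, hc⟩ := hf
  exact ⟨c, by rw [linearForm, Fintype.linearCombination_apply, hc]⟩

theorem linearForm_injective : Function.Injective (linearForm : (σ → R) → MvPolynomial σ R) :=
  fun c d h ↦ dotProduct_eq c d fun v ↦ by rw [← eval_linearForm, h, eval_linearForm]

theorem exists_dotProduct_eq_one {c : σ → K} (hc : c ≠ 0) : ∃ v, c ⬝ᵥ v = 1 := by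
  obtain ⟨v, hv⟩ := not_forall.mp (mt dotProduct_eq_zero_iff.mp hc)
  exact ⟨(c ⬝ᵥ v)⁻¹ • v, by rw [dotProduct_smul, smul_eq_mul, inv_mul_cancel₀ hv]⟩

/-- Substitution of the coordinates of `v - (c ⬝ᵥ v) • o`. When `c ⬝ᵥ o = 1` this is pullback along
the projection from the point `o` onto the hyperplane `c ⬝ᵥ v = 0`. -/
noncomputable def centralProjection (c o : σ → R) : MvPolynomial σ R →ₐ[R] MvPolynomial σ R :=
  aeval fun i ↦ X i - C (o i) * linearForm c

theorem centralProjection_linearForm (c o d : σ → R) :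
    centralProjection c o (linearForm d) = linearForm d - C (d ⬝ᵥ o) * linearForm c := by
  simp only [centralProjection, linearForm_apply d, map_sum, map_mul, dotProduct, algHom_C,
    algebraMap_eq, aeval_X, mul_sub, Finset.sum_sub_distrib, Finset.sum_mul, mul_assoc]

theorem centralProjection_linearForm_self {c o : σ → R} (h : c ⬝ᵥ o = 1) :
    centralProjection c o (linearForm c) = 0 := by
  rw [centralProjection_linearForm, h, C_1, one_mul, sub_self]

theorem linearForm_dvd_sub_centralProjection (c o : σ → R) (f : MvPolynomial σ R) :
    linearForm c ∣ f - centralProjection c o f := by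
  let q := Ideal.Quotient.mkₐ R (Ideal.span {linearForm c})
  have hq : q = q.comp (centralProjection c o) := by
    refine algHom_ext fun i ↦ ?_
    rw [AlgHom.comp_apply, centralProjection, aeval_X]
    refine Ideal.Quotient.eq.mpr ?_
    rw [sub_sub_cancel]
    exact Ideal.mul_mem_left _ _ (Ideal.mem_span_singleton_self _)
  exact Ideal.mem_span_singleton.mp (Ideal.Quotient.eq.mp (DFunLike.congr_fun hq f))

theorem linearForm_dvd_iff {c o : σ → R} (h : c ⬝ᵥ o = 1) {f : MvPolynomial σ R} :
    linearForm c ∣ f ↔ centralProjection c o f = 0 := by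
  refine ⟨?_, fun hf ↦ by simpa [hf] using linearForm_dvd_sub_centralProjection c o f⟩
  rintro ⟨g, rfl⟩
  rw [map_mul, centralProjection_linearForm_self h, zero_mul]

theorem isHomogeneous_centralProjection (c o : σ → R) {f : MvPolynomial σ R} {n : ℕ}
    (hf : f.IsHomogeneous n) : (centralProjection c o f).IsHomogeneous n := by
  rw [← one_mul n]
  exact hf.aeval _ fun i ↦ (isHomogeneous_X R i).sub ((isHomogeneous_linearForm c).C_mul (o i))

theorem prime_linearForm {c : σ → K} (hc : c ≠ 0) : Prime (linearForm c) := by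
  obtain ⟨o, ho⟩ := exists_dotProduct_eq_one hc
  refine ⟨(map_ne_zero_iff _ linearForm_injective).mpr hc, fun h ↦ ?_, fun f g h ↦ ?_⟩
  · exact one_ne_zero ((map_one (centralProjection c o)).symm.trans
      ((linearForm_dvd_iff ho).mp h.dvd))
  · simpa only [linearForm_dvd_iff ho, map_mul, mul_eq_zero] using h

end LinearForms

section PlaneGeometry

variable {K : Type} [Field K]

theorem finrank_ker_dotProductEquiv {c : Fin 3 → K} (hc : c ≠ 0) :
    Module.finrank K (LinearMap.ker (dotProductEquiv K (Fin 3) c)) = 2 := by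
  have := Module.Dual.finrank_ker_add_one_of_ne_zero
    ((dotProductEquiv K (Fin 3)).map_ne_zero_iff.mpr hc)
  rw [Module.finrank_fin_fun] at this
  omega

namespace ProjLine

variable {L M : ProjLine K} {P Q : P2 K}

theorem toSubmodule_injective :
    Function.Injective (toSubmodule : ProjLine K → Submodule K (Fin 3 → K)) := by
  rintro ⟨_, _⟩ ⟨_, _⟩ rfl
  rfl

theorem mem_points : P ∈ L.points ↔ P.rep ∈ L.toSubmodule := by
  rw [points, Set.mem_ofPred_eq, Projectivization.submodule_eq,
    Submodule.span_singleton_le_iff_mem]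

theorem eq_of_mem_points (hLM : L ≠ M) (hPL : P ∈ L.points) (hPM : P ∈ M.points)
    (hQL : Q ∈ L.points) (hQM : Q ∈ M.points) : P = Q := by
  by_contra hPQ
  refine hLM (toSubmodule_injective (Projectivization.line_unique hPQ _ _ L.finrank_eq_two
    M.finrank_eq_two ?_ ?_ ?_ ?_)) <;>
  rwa [Submodule.mem_projectivization_iff_submodule_le]

theorem exists_mem_points_inter (L M : ProjLine K) : ∃ P, P ∈ L.points ∧ P ∈ M.points := by
  have hne : L.toSubmodule ⊓ M.toSubmodule ≠ ⊥ := fun hbot ↦ by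
    have hdim := Submodule.finrank_sup_add_finrank_inf_eq L.toSubmodule M.toSubmodule
    have hle := Submodule.finrank_le (L.toSubmodule ⊔ M.toSubmodule)
    rw [L.finrank_eq_two, M.finrank_eq_two, hbot, finrank_bot] at hdim
    rw [Module.finrank_fin_fun] at hle
    omega
  obtain ⟨v, ⟨hvL, hvM⟩, hv⟩ := Submodule.exists_mem_ne_zero_of_ne_bot hne
  refine ⟨.mk K v hv, ?_, ?_⟩ <;>
  rwa [points, Set.mem_ofPred_eq, Projectivization.submodule_mk,
    Submodule.span_singleton_le_iff_mem]

/-- The line joining two distinct points. -/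
def join (P Q : P2 K) (h : P ≠ Q) : ProjLine K where
  toSubmodule := Submodule.span K {P.rep, Q.rep}
  finrank_eq_two := by
    rw [← Matrix.range_cons_cons_empty _ _ ![],
      finrank_span_eq_card (Projectivization.linearIndependent_pair_iff_ne.mpr h), Fintype.card_fin]

theorem mem_toSubmodule_join (h : P ≠ Q) {v : Fin 3 → K} :
    v ∈ (join P Q h).toSubmodule ↔ ∃ a b : K, a • P.rep + b • Q.rep = v :=
  Submodule.mem_span_pair

theorem left_mem_join (h : P ≠ Q) : P ∈ (join P Q h).points :=
  mem_points.mpr (Submodule.subset_span (.inl rfl))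

theorem right_mem_join (h : P ≠ Q) : Q ∈ (join P Q h).points :=
  mem_points.mpr (Submodule.subset_span (.inr rfl))

/-- The line of zeros of the linear form with coefficient vector `c`. -/
noncomputable def ofNormal (c : Fin 3 → K) (hc : c ≠ 0) : ProjLine K where
  toSubmodule := LinearMap.ker (dotProductEquiv K (Fin 3) c)
  finrank_eq_two := finrank_ker_dotProductEquiv hc

theorem exists_disjoint [Infinite K] (X : Finset (P2 K)) :
    ∃ M : ProjLine K, ∀ P ∈ X, P ∉ M.points := by
  classical
  obtain ⟨P₀⟩ : Nonempty (P2 K) := inferInstance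
  obtain ⟨φ, hφ⟩ := Module.exists_dual_forall_apply_ne_zero (K := K)
    (fun P : ↥(insert P₀ X) ↦ P.1.rep) fun P ↦ P.1.rep_nonzero
  obtain ⟨c, rfl⟩ := (dotProductEquiv K (Fin 3)).surjective φ
  have hc : c ≠ 0 := by
    rintro rfl
    exact hφ ⟨P₀, Finset.mem_insert_self _ _⟩ (by simp)
  exact ⟨ofNormal c hc, fun P hP ↦ mt mem_points.mp (hφ ⟨P, Finset.mem_insert_of_mem hP⟩)⟩

theorem exists_eq_ofNormal (L : ProjLine K) : ∃ c hc, L = ofNormal c hc := by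
  have hlt : L.toSubmodule < ⊤ := by
    refine lt_top_iff_ne_top.mpr fun h ↦ ?_
    have := L.finrank_eq_two
    rw [h, finrank_top, Module.finrank_fin_fun] at this
    omega
  obtain ⟨φ, hφ, hle⟩ := Submodule.exists_le_ker_of_lt_top _ hlt
  obtain ⟨c, rfl⟩ := (dotProductEquiv K (Fin 3)).surjective φ
  have hc : c ≠ 0 := (dotProductEquiv K (Fin 3)).map_ne_zero_iff.mp hφ
  exact ⟨c, hc, toSubmodule_injective (Submodule.eq_of_le_of_finrank_eq hle
    (L.finrank_eq_two.trans (ofNormal c hc).finrank_eq_two.symm))⟩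

/-- A coefficient vector of a linear equation of the line `L`, unique up to scaling. -/
noncomputable def normal (L : ProjLine K) : Fin 3 → K :=
  L.exists_eq_ofNormal.choose

theorem normal_ne_zero (L : ProjLine K) : L.normal ≠ 0 :=
  L.exists_eq_ofNormal.choose_spec.choose

theorem mem_toSubmodule {v : Fin 3 → K} : v ∈ L.toSubmodule ↔ L.normal ⬝ᵥ v = 0 :=
  iff_of_eq (congrArg (v ∈ ·.toSubmodule) L.exists_eq_ofNormal.choose_spec.choose_spec)

/-- A linear form defining the line `L`. -/
noncomputable def form (L : ProjLine K) : MvPolynomial (Fin 3) K :=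
  linearForm L.normal

theorem eval_form_eq_zero {v : Fin 3 → K} : eval v L.form = 0 ↔ v ∈ L.toSubmodule := by
  rw [form, eval_linearForm, mem_toSubmodule]

theorem eval_rep_form_eq_zero : eval P.rep L.form = 0 ↔ P ∈ L.points :=
  eval_form_eq_zero.trans mem_points.symm

theorem isHomogeneous_form (L : ProjLine K) : L.form.IsHomogeneous 1 :=
  isHomogeneous_linearForm _

theorem isHomogeneous_prod_form (B : Finset (ProjLine K)) :
    (∏ L ∈ B, L.form).IsHomogeneous B.card := by
  simpa using IsHomogeneous.prod B form (fun _ ↦ 1) fun L _ ↦ L.isHomogeneous_form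

theorem prime_form (L : ProjLine K) : Prime L.form :=
  prime_linearForm L.normal_ne_zero

theorem isRelPrime_form (h : L ≠ M) : IsRelPrime L.form M.form := by
  rw [L.prime_form.irreducible.isRelPrime_iff_not_dvd]
  rintro ⟨g, hg⟩
  refine h (toSubmodule_injective (Submodule.eq_of_le_of_finrank_eq (fun v hv ↦ ?_)
    (L.finrank_eq_two.trans M.finrank_eq_two.symm)))
  rw [← eval_form_eq_zero] at hv ⊢
  rw [hg, map_mul, hv, zero_mul]

theorem form_dvd_linearForm {d : Fin 3 → K} (h : ∀ v ∈ L.toSubmodule, d ⬝ᵥ v = 0) :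
    L.form ∣ linearForm d := by
  obtain ⟨o, ho⟩ := exists_dotProduct_eq_one L.normal_ne_zero
  suffices d = (d ⬝ᵥ o) • L.normal by
    rw [this, map_smul, smul_eq_C_mul]
    exact dvd_mul_left _ _
  refine dotProduct_eq _ _ fun v ↦ ?_
  have hv := h (v - (L.normal ⬝ᵥ v) • o) (by simp [mem_toSubmodule, dotProduct_sub, ho])
  rw [dotProduct_sub, dotProduct_smul, sub_eq_zero] at hv
  rw [hv, smul_dotProduct, smul_eq_mul, smul_eq_mul, mul_comm]

end ProjLine

end PlaneGeometry

section VanishingOrder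

section Dilation

variable {σ R : Type*} [Fintype σ] [CommRing R]

/-- Substitution of `l x * p + T * (x - l x * p)`, where `l x = lam ⬝ᵥ x` and `T` is a new variable.
When `lam ⬝ᵥ p = 1` this multiplies the linear forms vanishing at `p` by `T`. -/
noncomputable def dilation (p lam : σ → R) :
    MvPolynomial σ R →ₐ[R] Polynomial (MvPolynomial σ R) :=
  aeval fun i ↦ Polynomial.C (C (p i) * linearForm lam) +
    Polynomial.X * Polynomial.C (X i - C (p i) * linearForm lam)

theorem dilation_linearForm (p lam c : σ → R) :
    dilation p lam (linearForm c) = Polynomial.C (C (c ⬝ᵥ p) * linearForm lam) +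
      Polynomial.X * Polynomial.C (linearForm c - C (c ⬝ᵥ p) * linearForm lam) := by
  simp only [dilation, linearForm_apply c, dotProduct, map_sum, map_mul, map_sub, algHom_C, aeval_X,
    Polynomial.algebraMap_apply, algebraMap_eq, mul_add, Finset.sum_add_distrib, mul_sub,
    Finset.sum_sub_distrib, Finset.sum_mul, Finset.mul_sum, mul_assoc, mul_left_comm Polynomial.X]

theorem eval_one_dilation (p lam : σ → R) (f : MvPolynomial σ R) :
    (dilation p lam f).eval 1 = f := by
  have h : ((Polynomial.aeval (1 : MvPolynomial σ R)).restrictScalars R).comp (dilation p lam) =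
      AlgHom.id R _ :=
    algHom_ext fun i ↦ by simp [dilation]
  simpa [Polynomial.aeval_def, Polynomial.eval₂_id] using DFunLike.congr_fun h f

end Dilation

variable {K : Type} [Field K] {P : P2 K} {lam : Fin 3 → K} {f : MvPolynomial (Fin 3) K} {k : ℕ}

theorem X_pow_dvd_dilation (hf : f ∈ pointIdeal P ^ k) :
    Polynomial.X ^ k ∣ dilation P.rep lam f := by
  have hmap : (pointIdeal P).map (dilation P.rep lam) ≤ Ideal.span {Polynomial.X} := by
    rw [pointIdeal, Ideal.map_span, Ideal.span_le]
    rintro _ ⟨g, ⟨hg, hg0⟩, rfl⟩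
    obtain ⟨c, rfl⟩ := exists_eq_linearForm hg
    rw [eval_linearForm] at hg0
    rw [SetLike.mem_coe, Ideal.mem_span_singleton, dilation_linearForm, hg0]
    simp
  rw [← Ideal.mem_span_singleton, ← Ideal.span_singleton_pow]
  refine Ideal.pow_right_mono hmap k ?_
  rw [← Ideal.map_pow]
  exact Ideal.mem_map_of_mem _ hf

theorem dilation_mem_reesAlgebra (hlam : lam ⬝ᵥ P.rep = 1) (f : MvPolynomial (Fin 3) K) :
    dilation P.rep lam f ∈ reesAlgebra (pointIdeal P) := by
  induction f using MvPolynomial.induction_on with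
  | C a => rw [algHom_C]; exact (reesAlgebra (pointIdeal P)).algebraMap_mem (C a)
  | add f g hf hg => rw [map_add]; exact add_mem hf hg
  | mul_X f i hf =>
    rw [map_mul]
    refine mul_mem hf ?_
    rw [dilation, aeval_X, mul_comm Polynomial.X, Polynomial.C_mul_X_eq_monomial]
    refine add_mem ((reesAlgebra (pointIdeal P)).algebraMap_mem _) (reesAlgebra.monomial_mem.mpr ?_)
    rw [pow_one]
    exact Ideal.subset_span ⟨(isHomogeneous_X _ _).sub ((isHomogeneous_linearForm lam).C_mul _),
      by simp [eval_linearForm, hlam]⟩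

theorem mem_pointIdeal_pow_of_X_pow_dvd (hlam : lam ⬝ᵥ P.rep = 1)
    (h : Polynomial.X ^ k ∣ dilation P.rep lam f) : f ∈ pointIdeal P ^ k := by
  have hcoeff := (mem_reesAlgebra_iff _ _).mp (dilation_mem_reesAlgebra hlam f)
  rw [← eval_one_dilation P.rep lam f, Polynomial.eval_eq_sum_range]
  refine Ideal.sum_mem _ fun j _ ↦ ?_
  rw [one_pow, mul_one]
  rcases lt_or_ge j k with hj | hj
  · rw [Polynomial.X_pow_dvd_iff.mp h j hj]
    exact zero_mem _
  · exact Ideal.pow_le_pow_right hj (hcoeff j)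

theorem exists_dotProduct_rep_eq_one (P : P2 K) : ∃ lam : Fin 3 → K, lam ⬝ᵥ P.rep = 1 :=
  (exists_dotProduct_eq_one P.rep_nonzero).imp fun _ h ↦ (dotProduct_comm _ _).trans h

theorem mem_pointIdeal_of_eval_eq_zero (hf : f.IsHomogeneous k) (h : eval P.rep f = 0) :
    f ∈ pointIdeal P := by
  obtain ⟨lam, hlam⟩ := exists_dotProduct_rep_eq_one P
  let q := Ideal.Quotient.mkₐ K (pointIdeal P)
  have hX (i : Fin 3) : q (X i) = P.rep i • q (linearForm lam) := by
    rw [← map_smul, smul_eq_C_mul]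
    refine Ideal.Quotient.eq.mpr (Ideal.subset_span ⟨(isHomogeneous_X _ _).sub
      ((isHomogeneous_linearForm lam).C_mul _), ?_⟩)
    simp [eval_linearForm, hlam]
  have hq : q f = 0 := by
    rw [← zero_smul K (q (linearForm lam) ^ k), ← h, ← aeval_smul_of_isHomogeneous hf, ← funext hX]
    exact DFunLike.congr_fun (aeval_unique q) f
  exact Ideal.Quotient.eq_zero_iff_mem.mp hq

/-- The order of vanishing of `f` at `P`, i.e. the largest `k` with `f ∈ I_P ^ k`, see
`le_vanishingOrder`. Defining it as the order in `T` of a dilation of `f` makes it additive. -/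
noncomputable def vanishingOrder (P : P2 K) (f : MvPolynomial (Fin 3) K) : ℕ∞ :=
  emultiplicity Polynomial.X (dilation P.rep (exists_dotProduct_rep_eq_one P).choose f)

theorem le_vanishingOrder : k ≤ vanishingOrder P f ↔ f ∈ pointIdeal P ^ k := by
  rw [vanishingOrder, ← pow_dvd_iff_le_emultiplicity]
  exact ⟨mem_pointIdeal_pow_of_X_pow_dvd (exists_dotProduct_rep_eq_one P).choose_spec,
    X_pow_dvd_dilation⟩

theorem vanishingOrder_mul (P : P2 K) (f g : MvPolynomial (Fin 3) K) :
    vanishingOrder P (f * g) = vanishingOrder P f + vanishingOrder P g := by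
  rw [vanishingOrder, map_mul, emultiplicity_mul Polynomial.prime_X, vanishingOrder, vanishingOrder]

theorem vanishingOrder_prod {ι : Type*} (P : P2 K) (s : Finset ι)
    (f : ι → MvPolynomial (Fin 3) K) :
    vanishingOrder P (∏ i ∈ s, f i) = ∑ i ∈ s, vanishingOrder P (f i) := by
  simp only [vanishingOrder, map_prod, Finset.emultiplicity_prod Polynomial.prime_X]

theorem vanishingOrder_eq_zero : vanishingOrder P f = 0 ↔ f ∉ pointIdeal P := by
  rw [← pow_one (pointIdeal P), ← le_vanishingOrder, Nat.cast_one, Order.one_le_iff_ne_zero,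
    not_not]

namespace ProjLine

variable {L : ProjLine K}

theorem form_mem_pointIdeal : L.form ∈ pointIdeal P ↔ P ∈ L.points := by
  rw [← eval_rep_form_eq_zero]
  refine ⟨fun h ↦ ?_, fun h ↦ Ideal.subset_span ⟨L.isHomogeneous_form, h⟩⟩
  have hle : pointIdeal P ≤ RingHom.ker (eval P.rep) := Ideal.span_le.mpr fun f hf ↦ hf.2
  exact hle h

theorem vanishingOrder_form_of_mem (h : P ∈ L.points) : vanishingOrder P L.form = 1 := by
  have hdil (lam : Fin 3 → K) :
      dilation P.rep lam L.form = Polynomial.X * Polynomial.C L.form := by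
    rw [form, dilation_linearForm, mem_toSubmodule.mp (mem_points.mp h), C_0, zero_mul, sub_zero,
      Polynomial.C_0, zero_add]
  have hX : ¬ Polynomial.X ∣ Polynomial.C L.form := by
    rw [Polynomial.X_dvd_iff, Polynomial.coeff_C_zero]
    exact L.prime_form.ne_zero
  rw [vanishingOrder, hdil, emultiplicity_mul Polynomial.prime_X, emultiplicity_eq_zero.mpr hX,
    add_zero]
  exact (FiniteMultiplicity.of_not_isUnit Polynomial.not_isUnit_X
    Polynomial.X_ne_zero).emultiplicity_self

open Classical in
theorem vanishingOrder_form (P : P2 K) (L : ProjLine K) :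
    vanishingOrder P L.form = if P ∈ L.points then 1 else 0 := by
  split_ifs with h
  · exact vanishingOrder_form_of_mem h
  · exact vanishingOrder_eq_zero.mpr (mt form_mem_pointIdeal.mp h)

open Classical in
theorem vanishingOrder_prod_form (P : P2 K) (B : Finset (ProjLine K)) :
    vanishingOrder P (∏ L ∈ B, L.form) = {L ∈ B | P ∈ L.points}.card := by
  simp [vanishingOrder_prod, vanishingOrder_form]

end ProjLine

end VanishingOrder

section Bezout

variable {K : Type} [Field K]

namespace ProjLine

variable {L : ProjLine K} {O P Q : P2 K} {f : MvPolynomial (Fin 3) K} {m t : ℕ}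

theorem exists_notMem_points (L : ProjLine K) : ∃ O, O ∉ L.points := by
  obtain ⟨o, ho⟩ := exists_dotProduct_eq_one L.normal_ne_zero
  have ho0 : o ≠ 0 := by
    rintro rfl
    simp at ho
  refine ⟨.mk K o ho0, ?_⟩
  rw [points, Set.mem_ofPred_eq, Projectivization.submodule_mk, Submodule.span_singleton_le_iff_mem,
    mem_toSubmodule, ho]
  exact one_ne_zero

/-- Pullback of polynomials along the projection from the point `O` onto the line `L`. -/
noncomputable def projectionFrom (O : P2 K) (L : ProjLine K) :
    MvPolynomial (Fin 3) K →ₐ[K] MvPolynomial (Fin 3) K :=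
  centralProjection L.normal ((L.normal ⬝ᵥ O.rep)⁻¹ • O.rep)

theorem isHomogeneous_projectionFrom (O : P2 K) (L : ProjLine K) (hf : f.IsHomogeneous t) :
    (projectionFrom O L f).IsHomogeneous t :=
  isHomogeneous_centralProjection _ _ hf

theorem normal_dotProduct_inv_smul_rep (hO : O ∉ L.points) :
    L.normal ⬝ᵥ ((L.normal ⬝ᵥ O.rep)⁻¹ • O.rep) = 1 := by
  rw [mem_points, mem_toSubmodule] at hO
  rw [dotProduct_smul, smul_eq_mul, inv_mul_cancel₀ hO]

theorem form_dvd_iff (hO : O ∉ L.points) : L.form ∣ f ↔ projectionFrom O L f = 0 :=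
  linearForm_dvd_iff (normal_dotProduct_inv_smul_rep hO)

theorem join_form_dvd_projectionFrom_linearForm (hO : O ∉ L.points) (hP : P ∈ L.points)
    (hPO : P ≠ O) {d : Fin 3 → K} (hd : d ⬝ᵥ P.rep = 0) :
    (join P O hPO).form ∣ projectionFrom O L (linearForm d) := by
  have hnormal := normal_dotProduct_inv_smul_rep hO
  rw [mem_points, mem_toSubmodule] at hO hP
  rw [projectionFrom, centralProjection_linearForm, ← smul_eq_C_mul, ← map_smul, ← map_sub]
  refine form_dvd_linearForm fun v hv ↦ ?_
  obtain ⟨a, b, rfl⟩ := (mem_toSubmodule_join hPO).mp hv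
  simp only [sub_dotProduct, smul_dotProduct, dotProduct_add, dotProduct_smul, hd, hP, smul_eq_mul]
  field_simp
  ring

theorem join_form_pow_dvd_projectionFrom (hO : O ∉ L.points) (hP : P ∈ L.points) (hPO : P ≠ O)
    (hf : f ∈ pointIdeal P ^ m) : (join P O hPO).form ^ m ∣ projectionFrom O L f := by
  have hle : pointIdeal P ≤ (Ideal.span {(join P O hPO).form}).comap (projectionFrom O L) := by
    refine Ideal.span_le.mpr ?_
    rintro g ⟨hg, hg0⟩
    obtain ⟨d, rfl⟩ := exists_eq_linearForm hg
    rw [eval_linearForm] at hg0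
    exact Ideal.mem_span_singleton.mpr (join_form_dvd_projectionFrom_linearForm hO hP hPO hg0)
  rw [← Ideal.mem_span_singleton, ← Ideal.span_singleton_pow]
  exact Ideal.le_comap_pow _ m (Ideal.pow_right_mono hle m hf)

theorem join_ne_join (hO : O ∉ L.points) (hP : P ∈ L.points) (hQ : Q ∈ L.points) (hPQ : P ≠ Q)
    (hPO : P ≠ O) (hQO : Q ≠ O) : join P O hPO ≠ join Q O hQO := fun h ↦ by
  have hL : L ≠ join P O hPO := fun h ↦ hO (h ▸ right_mem_join hPO)
  exact hPQ (eq_of_mem_points hL hP (left_mem_join hPO) hQ (h ▸ left_mem_join hQO))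

/- Projecting `f` to `L` from a point `O` off `L` turns each point `P` of `Y` into the line `OP`,
and these lines are too many to divide a nonzero form of degree `t`. -/
theorem form_dvd_of_lt (Y : Finset (P2 K)) (hY : ∀ P ∈ Y, P ∈ L.points)
    (hf : f.IsHomogeneous t) (hfY : ∀ P ∈ Y, f ∈ pointIdeal P ^ m) (ht : t < m * Y.card) :
    L.form ∣ f := by
  obtain ⟨O, hO⟩ := L.exists_notMem_points
  rw [form_dvd_iff hO]
  by_contra hne
  have hYO (P : Y) : P.1 ≠ O := fun h ↦ hO (h ▸ hY P P.2)
  let G : MvPolynomial (Fin 3) K := ∏ P : Y, (join P.1 O (hYO P)).form ^ m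
  have hG : G.IsHomogeneous (m * Y.card) := by
    have := IsHomogeneous.prod Finset.univ _ (fun _ ↦ 1 * m) fun (P : Y) _ ↦
      (isHomogeneous_form (join P.1 O (hYO P))).pow m
    simpa [G, mul_comm] using this
  have hG0 : G ≠ 0 := Finset.prod_ne_zero_iff.mpr fun P _ ↦ pow_ne_zero _ (prime_form _).ne_zero
  have hdvd : G ∣ projectionFrom O L f := by
    refine Finset.prod_dvd_of_isRelPrime (fun P _ Q _ hPQ ↦ ?_) fun P _ ↦
      join_form_pow_dvd_projectionFrom hO (hY P P.2) (hYO P) (hfY P P.2)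
    exact (isRelPrime_form (join_ne_join hO (hY P P.2) (hY Q Q.2) (Subtype.coe_ne_coe.mpr hPQ)
      (hYO P) (hYO Q))).pow
  have hdeg := totalDegree_le_of_dvd_of_isDomain hdvd hne
  rw [hG.totalDegree hG0, (isHomogeneous_projectionFrom O L hf).totalDegree hne] at hdeg
  omega

theorem exists_form_dvd_sub_sum {ι : Type*} (B : Finset ι) (Q : ι → P2 K)
    (p : ι → MvPolynomial (Fin 3) K) (hQ : ∀ i ∈ B, Q i ∈ L.points)
    (hp : ∀ i ∈ B, (p i).IsHomogeneous t) (hp_ne : ∀ i ∈ B, eval (Q i).rep (p i) ≠ 0)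
    (hp_eq : ∀ i ∈ B, ∀ j ∈ B, j ≠ i → eval (Q i).rep (p j) = 0) (hf : f.IsHomogeneous t)
    (ht : t < B.card) : ∃ a : ι → K, L.form ∣ f - ∑ i ∈ B, C (a i) * p i := by
  classical
  have hQinj : Set.InjOn Q B := fun i hi j hj h ↦
    of_not_not fun hne ↦ hp_ne j hj (h ▸ hp_eq i hi j hj (Ne.symm hne))
  let a (i : ι) : K := eval (Q i).rep f / eval (Q i).rep (p i)
  have hg : (f - ∑ i ∈ B, C (a i) * p i).IsHomogeneous t :=
    hf.sub (.sum _ _ _ fun i hi ↦ (hp i hi).C_mul _)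
  have heval (i) (hi : i ∈ B) : eval (Q i).rep (f - ∑ j ∈ B, C (a j) * p j) = 0 := by
    rw [map_sub, map_sum, Finset.sum_eq_single_of_mem i hi, map_mul, eval_C,
      div_mul_cancel₀ _ (hp_ne i hi), sub_self]
    intro j hj hne
    rw [map_mul, hp_eq i hi j hj hne, mul_zero]
  refine ⟨a, form_dvd_of_lt (B.image Q) (m := 1) (Finset.forall_mem_image.mpr hQ) hg
    (Finset.forall_mem_image.mpr fun i hi ↦ ?_) ?_⟩
  · rw [pow_one]
    exact mem_pointIdeal_of_eval_eq_zero hg (heval i hi)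
  · rwa [Finset.card_image_of_injOn hQinj, one_mul]

end ProjLine

end Bezout

section HilbertFunction

attribute [local instance] gradedAlgebra

section GradedPieces

variable {σ K : Type*} [Field K]

theorem homogeneousComponent_mul_of_isHomogeneous {F : MvPolynomial σ K} {d : ℕ}
    (hF : F.IsHomogeneous d) (g : MvPolynomial σ K) (t : ℕ) :
    homogeneousComponent (d + t) (F * g) = F * homogeneousComponent t g := by
  have h := DirectSum.coe_decompose_mul_add_of_left_mem (homogeneousSubmodule σ K) (j := t) (b := g)
    ((mem_homogeneousSubmodule d F).mpr hF)
  exact (decomposition.decompose'_apply _ _).symm.trans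
    (h.trans (congrArg (F * ·) (decomposition.decompose'_apply _ _)))

theorem finrank_map_mulLeft {F : MvPolynomial σ K} (hF : F ≠ 0)
    (V : Submodule K (MvPolynomial σ K)) :
    Module.finrank K (V.map (LinearMap.mulLeft K F)) = Module.finrank K V :=
  (Submodule.equivMapOfInjective _ (mul_right_injective₀ hF) V).finrank_eq.symm

theorem mem_pow_idealOfVars_of_isHomogeneous {t : ℕ} {f : MvPolynomial σ K}
    (hf : f.IsHomogeneous t) : f ∈ idealOfVars σ K ^ t :=
  (mem_pow_idealOfVars_iff' t f).mpr fun _ hx ↦ hf.coeff_eq_zero hx.ne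

/-- The space of forms of degree `t` in the ideal `I`. -/
noncomputable def gradedPiece (I : Ideal (MvPolynomial σ K)) (t : ℕ) :
    Submodule K (MvPolynomial σ K) :=
  I.restrictScalars K ⊓ homogeneousSubmodule σ K t

theorem mem_gradedPiece {I : Ideal (MvPolynomial σ K)} {t : ℕ} {f : MvPolynomial σ K} :
    f ∈ gradedPiece I t ↔ f ∈ I ∧ f.IsHomogeneous t :=
  Iff.rfl

theorem gradedPiece_eq_map_of_dvd {I J : Ideal (MvPolynomial σ K)} {G : MvPolynomial σ K} {d t : ℕ}
    (hG : G.IsHomogeneous d) (hG0 : G ≠ 0) (hIJ : ∀ g, G * g ∈ I ↔ g ∈ J)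
    (hdvd : ∀ f ∈ I, f.IsHomogeneous (d + t) → G ∣ f) :
    gradedPiece I (d + t) = (gradedPiece J t).map (LinearMap.mulLeft K G) := by
  refine le_antisymm (fun f hf ↦ ?_) (Submodule.map_le_iff_le_comap.mpr fun g hg ↦ ?_)
  · obtain ⟨hfI, hf⟩ := mem_gradedPiece.mp hf
    obtain ⟨g, rfl⟩ := hdvd f hfI hf
    have hg : homogeneousComponent t g = g := mul_left_cancel₀ hG0 <| by
      rw [← homogeneousComponent_mul_of_isHomogeneous hG, homogeneousComponent_eq_self hf]
    exact ⟨g, ⟨(hIJ g).mp hfI, hg ▸ homogeneousComponent_isHomogeneous t g⟩, rfl⟩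
  · exact ⟨(hIJ g).mpr hg.1, hG.mul hg.2⟩

theorem gradedPiece_eq_bot_of_dvd {I : Ideal (MvPolynomial σ K)} {G : MvPolynomial σ K} {d t : ℕ}
    (hG : G.IsHomogeneous d) (hG0 : G ≠ 0) (ht : t < d)
    (hdvd : ∀ f ∈ I, f.IsHomogeneous t → G ∣ f) : gradedPiece I t = ⊥ := by
  refine (Submodule.eq_bot_iff _).mpr fun f ⟨hfI, hf⟩ ↦ of_not_not fun hf0 ↦ ?_
  have hle := totalDegree_le_of_dvd_of_isDomain (hdvd f hfI hf) hf0
  rw [hG.totalDegree hG0, IsHomogeneous.totalDegree hf hf0] at hle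
  omega

theorem gradedPiece_sup_map_mulLeft {I : Ideal (MvPolynomial σ K)} {e : MvPolynomial σ K} {u : ℕ}
    (hI : I.IsHomogeneous (homogeneousSubmodule σ K)) (he : e.IsHomogeneous 1)
    (hle : idealOfVars σ K ^ (1 + u) ≤ I ⊔ Ideal.span {e}) :
    gradedPiece I (1 + u) ⊔ (homogeneousSubmodule σ K u).map (LinearMap.mulLeft K e) =
      homogeneousSubmodule σ K (1 + u) := by
  refine le_antisymm (sup_le inf_le_right
    (Submodule.map_le_iff_le_comap.mpr fun g hg ↦ he.mul hg)) fun f hf ↦ ?_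
  obtain ⟨a, ha, b, hb, rfl⟩ := Submodule.mem_sup.mp (hle (mem_pow_idealOfVars_of_isHomogeneous hf))
  obtain ⟨h, rfl⟩ := Ideal.mem_span_singleton.mp hb
  rw [← homogeneousComponent_eq_self hf, map_add, homogeneousComponent_mul_of_isHomogeneous he]
  exact add_mem
    (Submodule.mem_sup_left ⟨homogeneousComponent_mem_of_mem hI ha _, homogeneousComponent_mem _ _⟩)
    (Submodule.mem_sup_right ⟨_, homogeneousComponent_mem _ _, rfl⟩)

theorem gradedPiece_inf_map_mulLeft {I : Ideal (MvPolynomial σ K)} {e : MvPolynomial σ K} {u : ℕ}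
    (he : e.IsHomogeneous 1) (hreg : ∀ g, e * g ∈ I → g ∈ I) :
    gradedPiece I (1 + u) ⊓ (homogeneousSubmodule σ K u).map (LinearMap.mulLeft K e) =
      (gradedPiece I u).map (LinearMap.mulLeft K e) := by
  refine le_antisymm ?_ (Submodule.map_le_iff_le_comap.mpr fun g hg ↦
    ⟨⟨I.mul_mem_left e hg.1, he.mul hg.2⟩, ⟨g, hg.2, rfl⟩⟩)
  rintro _ ⟨⟨hI, -⟩, ⟨g, hg, rfl⟩⟩
  exact ⟨g, ⟨hreg g hI, hg⟩, rfl⟩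

instance finiteDimensional_homogeneousSubmodule [Finite σ] (t : ℕ) :
    FiniteDimensional K (homogeneousSubmodule σ K t) :=
  Module.Finite.iff_fg.mpr (homogeneousSubmodule_fg σ K t)

variable [Fintype σ]

theorem finrank_homogeneousSubmodule (t : ℕ) :
    Module.finrank K (homogeneousSubmodule σ K t) = (Fintype.card σ).multichoose t := by
  classical
  have hset : {d : σ →₀ ℕ | d.degree = t} = (Finset.univ : Finset σ).finsuppAntidiag t := by
    ext d
    simp [Finsupp.degree_eq_sum]
  rw [homogeneousSubmodule_eq_finsupp_supported, hset,
    (AddMonoidAlgebra.supportedEquivFinsupp (R := K) (S := K) _).finrank_eq,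
    Module.finrank_finsupp_self]
  simp only [Finset.coe_sort_coe, Fintype.card_coe, Finset.card_finsuppAntidiag_nat_eq_multichoose,
    Finset.card_univ]

theorem finrank_gradedPiece_le (I : Ideal (MvPolynomial σ K)) (t : ℕ) :
    Module.finrank K (gradedPiece I t) ≤ (Fintype.card σ).multichoose t :=
  (Submodule.finrank_mono inf_le_right).trans_eq (finrank_homogeneousSubmodule t)

end GradedPieces

section DeltaHilb

variable {K : Type} [Field K] {I J : Ideal (MvPolynomial (Fin 3) K)}

theorem multichoose_three_succ (t : ℕ) :
    Nat.multichoose 3 (t + 1) = t + 2 + Nat.multichoose 3 t := by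
  rw [Nat.multichoose_succ_succ, Nat.multichoose_two]

theorem natCast_hilb (I : Ideal (MvPolynomial (Fin 3) K)) (t : ℕ) :
    (hilb I t : ℤ) = Nat.multichoose 3 t - Module.finrank K (gradedPiece I t) := by
  have hle : Module.finrank K (gradedPiece I t) ≤ Nat.multichoose 3 t := finrank_gradedPiece_le I t
  rw [hilb, finrank_homogeneousSubmodule, Fintype.card_fin]
  exact Nat.cast_sub hle

theorem hilbZ_natCast (I : Ideal (MvPolynomial (Fin 3) K)) (t : ℕ) : hilbZ I t = hilb I t := by
  simp [hilbZ]

theorem deltaHilb_natCast_succ (I : Ideal (MvPolynomial (Fin 3) K)) (t : ℕ) :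
    deltaHilb I (t + 1 : ℕ) = t + 2 + Module.finrank K (gradedPiece I t) -
      Module.finrank K (gradedPiece I (t + 1)) := by
  have hsub : ((t + 1 : ℕ) : ℤ) - 1 = t := by push_cast; ring
  rw [deltaHilb, hsub, hilbZ_natCast, hilbZ_natCast, natCast_hilb, natCast_hilb,
    multichoose_three_succ]
  push_cast
  ring

theorem deltaHilb_zero (I : Ideal (MvPolynomial (Fin 3) K)) :
    deltaHilb I (0 : ℕ) = 1 - Module.finrank K (gradedPiece I 0) := by
  rw [deltaHilb, hilbZ_natCast, natCast_hilb]
  simp [hilbZ]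

theorem deltaHilb_eq_add_of_dvd {G : MvPolynomial (Fin 3) K} {d t : ℕ} (hd : 0 < d)
    (hG : G.IsHomogeneous d) (hG0 : G ≠ 0) (hIJ : ∀ g, G * g ∈ I ↔ g ∈ J)
    (hdvd : ∀ u ≤ d + t, ∀ f ∈ I, f.IsHomogeneous u → G ∣ f) :
    deltaHilb I (d + t : ℕ) = d + deltaHilb J t := by
  have hfinrank (u : ℕ) (hu : u ≤ t) :
      Module.finrank K (gradedPiece I (d + u)) = Module.finrank K (gradedPiece J u) := by
    rw [gradedPiece_eq_map_of_dvd hG hG0 hIJ (hdvd _ (by omega)), finrank_map_mulLeft hG0]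
  cases t with
  | zero =>
    obtain ⟨d, rfl⟩ := Nat.exists_eq_add_one.mpr hd
    have hbot := gradedPiece_eq_bot_of_dvd hG hG0 (lt_add_one d) (hdvd d (by omega))
    rw [add_zero, deltaHilb_natCast_succ, deltaHilb_zero, hbot, finrank_bot, ← hfinrank 0 le_rfl]
    push_cast
    ring
  | succ t =>
    rw [← add_assoc, deltaHilb_natCast_succ, deltaHilb_natCast_succ, add_assoc d, hfinrank _ le_rfl,
      hfinrank _ t.le_succ]
    push_cast
    ring

theorem deltaHilb_eq_zero {e : MvPolynomial (Fin 3) K} {u : ℕ}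
    (hI : I.IsHomogeneous (homogeneousSubmodule (Fin 3) K)) (he : e.IsHomogeneous 1) (he0 : e ≠ 0)
    (hreg : ∀ g, e * g ∈ I → g ∈ I)
    (hle : idealOfVars (Fin 3) K ^ (1 + u) ≤ I ⊔ Ideal.span {e}) :
    deltaHilb I (1 + u : ℕ) = 0 := by
  have : FiniteDimensional K (gradedPiece I (1 + u)) :=
    Submodule.finiteDimensional_of_le inf_le_right
  have hdim := Submodule.finrank_sup_add_finrank_inf_eq (gradedPiece I (1 + u))
    ((homogeneousSubmodule (Fin 3) K u).map (LinearMap.mulLeft K e))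
  rw [gradedPiece_sup_map_mulLeft hI he hle, gradedPiece_inf_map_mulLeft he hreg,
    finrank_map_mulLeft he0, finrank_map_mulLeft he0, finrank_homogeneousSubmodule,
    finrank_homogeneousSubmodule, Fintype.card_fin, add_comm 1 u, multichoose_three_succ] at hdim
  rw [add_comm 1 u, deltaHilb_natCast_succ]
  omega

theorem deltaHilb_top (t : ℤ) : deltaHilb (⊤ : Ideal (MvPolynomial (Fin 3) K)) t = 0 := by
  have hhilb (u : ℕ) : hilb (⊤ : Ideal (MvPolynomial (Fin 3) K)) u = 0 := by
    have hpiece : gradedPiece ⊤ u = homogeneousSubmodule (Fin 3) K u := top_inf_eq _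
    rw [← Nat.cast_eq_zero (R := ℤ), natCast_hilb, hpiece, finrank_homogeneousSubmodule,
      Fintype.card_fin, sub_self]
  simp only [deltaHilb, hilbZ, hhilb, Nat.cast_zero, ite_self, sub_self]

end DeltaHilb

end HilbertFunction

section FatPoints

attribute [local instance] gradedAlgebra

theorem sup_pow_le_pow_sup {A : Type*} [CommSemiring A] (I J : Ideal A) (n : ℕ) :
    (I ⊔ J) ^ n ≤ I ^ n ⊔ J := by
  induction n with
  | zero => simp
  | succ n ih =>
    calc (I ⊔ J) ^ (n + 1) ≤ (I ^ n ⊔ J) * (I ⊔ J) := pow_succ (I ⊔ J) n ▸ Ideal.mul_mono_left ih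
      _ = I ^ n * I ⊔ J * I ⊔ (I ^ n * J ⊔ J * J) := by
        rw [Ideal.mul_sup, Ideal.sup_mul, Ideal.sup_mul]
      _ ≤ I ^ (n + 1) ⊔ J := sup_le (sup_le_sup (pow_succ I n).ge Ideal.mul_le_left)
        (le_sup_of_le_right (sup_le Ideal.mul_le_right Ideal.mul_le_right))

variable {K : Type} [Field K] {X : Set (P2 K)} {m n : ℕ} {f g : MvPolynomial (Fin 3) K}

theorem mem_fatIdeal : f ∈ fatIdeal X m ↔ ∀ P ∈ X, f ∈ pointIdeal P ^ m := by
  simp only [fatIdeal, Submodule.mem_iInf]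

theorem fatIdeal_zero : fatIdeal X 0 = ⊤ := by
  simp [fatIdeal]

theorem pow_fatIdeal_one_le (X : Set (P2 K)) (n : ℕ) : fatIdeal X 1 ^ n ≤ fatIdeal X n := by
  refine le_iInf₂ fun P hP ↦ Ideal.pow_right_mono ?_ n
  exact (iInf₂_le P hP).trans_eq (pow_one _)

theorem isHomogeneous_pointIdeal_pow (P : P2 K) (n : ℕ) :
    (pointIdeal P ^ n).IsHomogeneous (homogeneousSubmodule (Fin 3) K) := by
  induction n with
  | zero =>
    rw [pow_zero, Ideal.one_eq_top]
    exact Ideal.IsHomogeneous.top _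
  | succ n ih =>
    rw [pow_succ]
    exact Ideal.IsHomogeneous.mul ih (Ideal.homogeneous_span _ _ fun f hf ↦ ⟨1, hf.1⟩)

theorem isHomogeneous_fatIdeal (X : Set (P2 K)) (m : ℕ) :
    (fatIdeal X m).IsHomogeneous (homogeneousSubmodule (Fin 3) K) :=
  Ideal.IsHomogeneous.iInf₂ fun P _ ↦ isHomogeneous_pointIdeal_pow P m

theorem mul_mem_fatIdeal_iff {a : ℕ} (hf : ∀ P ∈ X, vanishingOrder P f = a) :
    f * g ∈ fatIdeal X (n + a) ↔ g ∈ fatIdeal X n := by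
  simp only [mem_fatIdeal, ← le_vanishingOrder]
  refine forall₂_congr fun P hP ↦ ?_
  rw [vanishingOrder_mul, hf P hP, Nat.cast_add, add_comm (n : ℕ∞),
    ENat.add_le_add_iff_left (ENat.natCast_ne_top a)]

theorem mem_fatIdeal_of_form_mul_mem {M : ProjLine K} (hM : ∀ P ∈ X, P ∉ M.points)
    (h : M.form * g ∈ fatIdeal X n) : g ∈ fatIdeal X n :=
  (mul_mem_fatIdeal_iff (a := 0) fun P hP ↦
    vanishingOrder_eq_zero.mpr (mt ProjLine.form_mem_pointIdeal.mp (hM P hP))).mp h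

end FatPoints

section StarConfiguration

variable {K : Type} [Field K]

open Classical in
/-- `X` is the star configuration cut out by the lines `B`: it contains the pairwise intersections
of these lines, and no three of the lines meet in a point of `X`. -/
structure IsStarConfiguration (B : Finset (ProjLine K)) (X : Finset (P2 K)) : Prop where
  card_lines_through : ∀ P ∈ X, {L ∈ B | P ∈ L.points}.card = 2
  exists_mem_points : ∀ L ∈ B, ∀ M ∈ B, L ≠ M → ∃ P ∈ X, P ∈ L.points ∧ P ∈ M.points

namespace IsStarConfiguration

variable {B : Finset (ProjLine K)} {X : Finset (P2 K)} {L L' M : ProjLine K} {Q : P2 K}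
  {f g : MvPolynomial (Fin 3) K} {m n s t : ℕ}

theorem prod_form_mul_mem_fatIdeal (hX : IsStarConfiguration B X) :
    (∏ L ∈ B, L.form) * g ∈ fatIdeal X (n + 2) ↔ g ∈ fatIdeal X n :=
  mul_mem_fatIdeal_iff fun P hP ↦ by
    rw [ProjLine.vanishingOrder_prod_form, hX.card_lines_through P hP]

open Classical in
theorem exists_mem_points_of_mem (hX : IsStarConfiguration B X) {P : P2 K} (hP : P ∈ X)
    (L : ProjLine K) : ∃ M ∈ B.erase L, P ∈ M.points := by
  obtain ⟨M, hM, hML⟩ := Finset.exists_mem_ne (hX.card_lines_through P hP).ge L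
  rw [Finset.mem_filter] at hM
  exact ⟨M, Finset.mem_erase.mpr ⟨hML, hM.1⟩, hM.2⟩

open Classical in
theorem card_le_card_points_add_one (hX : IsStarConfiguration B X) (hL : L ∈ B) :
    B.card ≤ {P ∈ X | P ∈ L.points}.card + 1 := by
  have hmeet (M) (hM : M ∈ B.erase L) : ∃ P ∈ X, P ∈ L.points ∧ P ∈ M.points :=
    hX.exists_mem_points L hL M (Finset.mem_of_mem_erase hM) (Finset.ne_of_mem_erase hM).symm
  choose! P hPX hPL hPM using hmeet
  have hinj : Set.InjOn P (B.erase L) := by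
    intro M hM N hN hMN
    by_contra hne
    have hsub : {L, M, N} ⊆ {L' ∈ B | P M ∈ L'.points} := by
      simp only [Finset.insert_subset_iff, Finset.singleton_subset_iff, Finset.mem_filter]
      exact ⟨⟨hL, hPL M hM⟩, ⟨Finset.mem_of_mem_erase hM, hPM M hM⟩,
        ⟨Finset.mem_of_mem_erase hN, hMN ▸ hPM N hN⟩⟩
    have hle := Finset.card_le_card hsub
    rw [hX.card_lines_through _ (hPX M hM), Finset.card_eq_three.mpr ⟨L, M, N,
      (Finset.ne_of_mem_erase hM).symm, (Finset.ne_of_mem_erase hN).symm, hne, rfl⟩] at hle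
    omega
  rw [← Finset.card_erase_add_one hL, Nat.add_le_add_iff_right]
  exact Finset.card_le_card_of_injOn P
    (fun M hM ↦ Finset.mem_filter.mpr ⟨hPX M hM, hPL M hM⟩) hinj

theorem prod_form_dvd (hX : IsStarConfiguration B X) (hB : B.card = s + 1)
    (hfX : f ∈ fatIdeal X m) (hf : f.IsHomogeneous t) (ht : t < m * s) :
    ∏ L ∈ B, L.form ∣ f := by
  classical
  refine Finset.prod_dvd_of_isRelPrime (fun L _ M _ h ↦ ProjLine.isRelPrime_form h) fun L hL ↦ ?_
  refine ProjLine.form_dvd_of_lt {P ∈ X | P ∈ L.points} (fun P hP ↦ (Finset.mem_filter.mp hP).2) hf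
    (fun P hP ↦ mem_fatIdeal.mp hfX P (Finset.mem_filter.mp hP).1) (ht.trans_le ?_)
  have := hX.card_le_card_points_add_one hL
  exact Nat.mul_le_mul_left m (by omega)

theorem notMem_points_of_ne (hX : IsStarConfiguration B X) (hM : ∀ P ∈ X, P ∉ M.points)
    (hL : L ∈ B) (hL' : L' ∈ B) (h : L ≠ L') (hQL : Q ∈ L.points) (hQM : Q ∈ M.points) :
    Q ∉ L'.points := fun hQL' ↦ by
  obtain ⟨P, hP, hPL, hPL'⟩ := hX.exists_mem_points L hL L' hL' h
  exact hM P hP (ProjLine.eq_of_mem_points h hPL hPL' hQL hQL' ▸ hQM)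

open Classical in
theorem prod_erase_form_mem_fatIdeal (hX : IsStarConfiguration B X) (L : ProjLine K) :
    ∏ M ∈ B.erase L, M.form ∈ fatIdeal X 1 := by
  refine mem_fatIdeal.mpr fun P hP ↦ ?_
  obtain ⟨M, hM, hPM⟩ := hX.exists_mem_points_of_mem hP L
  rw [pow_one]
  exact Ideal.mem_of_dvd _ (Finset.dvd_prod_of_mem _ hM) (ProjLine.form_mem_pointIdeal.mpr hPM)

/- Lagrange interpolation at the points where `M` meets the lines of `B`. -/
theorem mem_fatIdeal_sup_span (hX : IsStarConfiguration B X) (hM : ∀ P ∈ X, P ∉ M.points)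
    (hB : B.card = s + 1) (hf : f.IsHomogeneous s) :
    f ∈ fatIdeal X 1 ⊔ Ideal.span {M.form} := by
  classical
  choose Q hQL hQM using fun L : ProjLine K ↦ L.exists_mem_points_inter M
  have hQ {L L'} (hL : L ∈ B) (hL' : L' ∈ B) (h : L ≠ L') : Q L ∉ L'.points :=
    hX.notMem_points_of_ne hM hL hL' h (hQL L) (hQM L)
  let p (L : ProjLine K) : MvPolynomial (Fin 3) K := ∏ L' ∈ B.erase L, L'.form
  have hp (L) (hL : L ∈ B) : (p L).IsHomogeneous s := by
    rw [← Nat.add_one_sub_one s, ← hB, ← Finset.card_erase_of_mem hL]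
    exact ProjLine.isHomogeneous_prod_form _
  have hp_ne (L) (hL : L ∈ B) : eval (Q L).rep (p L) ≠ 0 := by
    rw [map_prod, Finset.prod_ne_zero_iff]
    exact fun L' hL' ↦ mt ProjLine.eval_rep_form_eq_zero.mp
      (hQ hL (Finset.mem_of_mem_erase hL') (Finset.ne_of_mem_erase hL').symm)
  have hp_eq (L) (hL : L ∈ B) (L') (_ : L' ∈ B) (hne : L' ≠ L) :
      eval (Q L).rep (p L') = 0 := by
    rw [map_prod]
    exact Finset.prod_eq_zero (Finset.mem_erase.mpr ⟨hne.symm, hL⟩)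
      (ProjLine.eval_rep_form_eq_zero.mpr (hQL L))
  obtain ⟨a, ha⟩ := ProjLine.exists_form_dvd_sub_sum B Q p (fun L _ ↦ hQM L) hp hp_ne hp_eq hf
    (hB ▸ lt_add_one s)
  rw [← add_sub_cancel (∑ L ∈ B, C (a L) * p L) f]
  exact Submodule.add_mem_sup
    (Ideal.sum_mem _ fun L _ ↦ Ideal.mul_mem_left _ _ (hX.prod_erase_form_mem_fatIdeal L))
    (Ideal.mem_span_singleton.mpr ha)

theorem pow_idealOfVars_le (hX : IsStarConfiguration B X) (hM : ∀ P ∈ X, P ∉ M.points)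
    (hB : B.card = s + 1) (n : ℕ) :
    idealOfVars (Fin 3) K ^ (n * s) ≤ fatIdeal X n ⊔ Ideal.span {M.form} := by
  have hbase : idealOfVars (Fin 3) K ^ s ≤ fatIdeal X 1 ⊔ Ideal.span {M.form} := by
    rw [pow_idealOfVars_eq_span, Ideal.span_le]
    rintro _ ⟨d, hd, rfl⟩
    exact hX.mem_fatIdeal_sup_span hM hB (isHomogeneous_monomial 1 hd)
  rw [mul_comm, pow_mul]
  exact (Ideal.pow_right_mono hbase n).trans ((sup_pow_le_pow_sup _ _ n).trans
    (sup_le_sup_right (pow_fatIdeal_one_le _ n) _))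

variable [Infinite K]

theorem deltaHilb_fatIdeal_eq_zero (hX : IsStarConfiguration B X) (hB : B.card = s + 1)
    (hs : 0 < s) (ht : n * s ≤ t) : deltaHilb (fatIdeal (X : Set (P2 K)) n) t = 0 := by
  rcases n.eq_zero_or_pos with rfl | hn
  · rw [fatIdeal_zero, deltaHilb_top]
  obtain ⟨M, hM⟩ := ProjLine.exists_disjoint X
  obtain ⟨u, rfl⟩ := Nat.exists_eq_add_of_le ((Nat.mul_pos hn hs).trans_le ht)
  exact deltaHilb_eq_zero (isHomogeneous_fatIdeal _ n) M.isHomogeneous_form M.prime_form.ne_zero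
    (fun g ↦ mem_fatIdeal_of_form_mul_mem hM)
    ((Ideal.pow_le_pow_right ht).trans (hX.pow_idealOfVars_le hM hB n))

theorem deltaHilb_fatIdeal (hX : IsStarConfiguration B X) (hB : B.card = s + 1) (hs : 2 ≤ s)
    (hm : 2 ≤ m) : deltaHilb (fatIdeal (X : Set (P2 K)) m) (m * s - 1) = s + 1 := by
  obtain ⟨n, rfl⟩ := Nat.exists_eq_add_of_le' hm
  obtain ⟨r, rfl⟩ := Nat.exists_eq_add_of_le' hs
  have hdeg : ((n + 2 : ℕ) * (r + 2 : ℕ) - 1 : ℤ) = (B.card + (n * (r + 2) + r) : ℕ) := by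
    rw [hB]
    push_cast
    ring
  have hdvd (u) (hu : u ≤ B.card + (n * (r + 2) + r)) (f) (hfX : f ∈ fatIdeal X (n + 2))
      (hf : f.IsHomogeneous u) : ∏ L ∈ B, L.form ∣ f := by
    refine hX.prod_form_dvd hB hfX hf (hu.trans_lt ?_)
    rw [hB]
    linarith
  rw [hdeg, deltaHilb_eq_add_of_dvd (by omega) (ProjLine.isHomogeneous_prod_form B)
      (Finset.prod_ne_zero_iff.mpr fun L _ ↦ L.prime_form.ne_zero)
      (fun g ↦ hX.prod_form_mul_mem_fatIdeal) hdvd,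
    hX.deltaHilb_fatIdeal_eq_zero hB (by omega) le_self_add, hB]
  push_cast
  ring

end IsStarConfiguration

end StarConfiguration

section DoubleCounting

variable {α β : Type*} {A : Finset α} {B : Finset β} {r : α → β → Prop}
  [∀ a b, Decidable (r a b)] {s : ℕ}

theorem card_mul_le_sum_card (h : ∀ b ∈ B, s ≤ {a ∈ A | r a b}.card) :
    B.card * s ≤ ∑ a ∈ A, {b ∈ B | r a b}.card := by
  rw [← smul_eq_mul]
  exact (Finset.card_nsmul_le_sum _ _ _ h).trans_eq
    (Finset.sum_card_bipartiteAbove_eq_sum_card_bipartiteBelow r).symm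

theorem natCast_card_offDiag (C : Finset β) : (C.offDiag.card : ℤ) = C.card * (C.card - 1) := by
  rw [Finset.offDiag_card, Nat.cast_sub (Nat.le_mul_self _)]
  push_cast
  ring

theorem sum_card_offDiag_eq_sum_card_common (A : Finset α) (B : Finset β) (r : α → β → Prop)
    [∀ a b, Decidable (r a b)] :
    ∑ a ∈ A, {b ∈ B | r a b}.offDiag.card =
      ∑ p ∈ B.offDiag, {a ∈ A | r a p.1 ∧ r a p.2}.card := by
  refine Eq.trans (Finset.sum_congr rfl fun a _ ↦ congrArg Finset.card ?_)
    (Finset.sum_card_bipartiteAbove_eq_sum_card_bipartiteBelow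
      fun a (p : β × β) ↦ r a p.1 ∧ r a p.2)
  ext p
  simp only [Finset.mem_offDiag, Finset.mem_filter, Finset.bipartiteAbove]
  tauto

/- With `x a` the number of elements of `B` related to `a`, the three bounds give
`∑ a ∈ A, (x a - 2) ^ 2 ≤ 0`. -/
theorem card_filter_eq_two (hB : B.card = s + 1) (hA : 2 * A.card ≤ s * (s + 1))
    (hs : ∀ b ∈ B, s ≤ {a ∈ A | r a b}.card)
    (hcommon : ∀ p ∈ B.offDiag, {a ∈ A | r a p.1 ∧ r a p.2}.card ≤ 1) :
    ∀ a ∈ A, {b ∈ B | r a b}.card = 2 := by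
  let x (a : α) : ℤ := {b ∈ B | r a b}.card
  have hsum : (s + 1) * s ≤ ∑ a ∈ A, x a := by
    have hle := Int.ofNat_le.mpr (card_mul_le_sum_card hs)
    rwa [hB, Nat.cast_mul, Nat.cast_succ, Nat.cast_sum] at hle
  have hpairs : ∑ a ∈ A, x a * (x a - 1) ≤ (s + 1) * s := by
    have hle := Finset.sum_le_card_nsmul _ _ _ hcommon
    rw [← sum_card_offDiag_eq_sum_card_common, smul_eq_mul, mul_one] at hle
    have hcast := Int.ofNat_le.mpr hle
    rw [natCast_card_offDiag, hB] at hcast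
    push_cast [natCast_card_offDiag] at hcast
    linarith
  have hsq : ∑ a ∈ A, (x a - 2) ^ 2 =
      ∑ a ∈ A, x a * (x a - 1) - 3 * ∑ a ∈ A, x a + 4 * A.card := by
    rw [Finset.mul_sum, ← Finset.sum_sub_distrib, mul_comm 4, ← nsmul_eq_mul, ← Finset.sum_const,
      ← Finset.sum_add_distrib]
    exact Finset.sum_congr rfl fun a _ ↦ by ring
  have hzero : ∑ a ∈ A, (x a - 2) ^ 2 = 0 := by
    refine le_antisymm ?_ (Finset.sum_nonneg fun a _ ↦ sq_nonneg _)
    zify at hA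
    linarith
  intro a ha
  have hxa := (Finset.sum_eq_zero_iff_of_nonneg fun a _ ↦ sq_nonneg _).mp hzero a ha
  exact Int.ofNat_inj.mp (sub_eq_zero.mp ((pow_eq_zero_iff two_ne_zero).mp hxa))

theorem card_filter_and_eq_one (hB : B.card = s + 1) (hA : 2 * A.card ≤ s * (s + 1))
    (hs : ∀ b ∈ B, s ≤ {a ∈ A | r a b}.card)
    (hcommon : ∀ p ∈ B.offDiag, {a ∈ A | r a p.1 ∧ r a p.2}.card ≤ 1) :
    ∀ p ∈ B.offDiag, {a ∈ A | r a p.1 ∧ r a p.2}.card = 1 := by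
  have htwo := card_filter_eq_two hB hA hs hcommon
  refine (Finset.sum_eq_sum_iff_of_le hcommon).mp
    (le_antisymm (Finset.sum_le_sum hcommon) ?_)
  calc ∑ p ∈ B.offDiag, 1 = B.card * s := by
        rw [Finset.sum_const, smul_eq_mul, mul_one, Finset.offDiag_card, ← Nat.mul_sub_one, hB,
          Nat.add_sub_cancel]
    _ ≤ ∑ a ∈ A, {b ∈ B | r a b}.card := card_mul_le_sum_card hs
    _ = ∑ a ∈ A, {b ∈ B | r a b}.offDiag.card :=
        Finset.sum_congr rfl fun a ha ↦ by rw [Finset.offDiag_card, htwo a ha]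
    _ = ∑ p ∈ B.offDiag, {a ∈ A | r a p.1 ∧ r a p.2}.card :=
        sum_card_offDiag_eq_sum_card_common A B r

end DoubleCounting

section KConfiguration

variable {K : Type} [Field K]

open Classical in
theorem IsStarConfiguration.of_card_le {X : Finset (P2 K)} {B : Finset (ProjLine K)} {s : ℕ}
    (hB : B.card = s + 1) (hX : 2 * X.card ≤ s * (s + 1))
    (hL : ∀ L ∈ B, s ≤ {P ∈ X | P ∈ L.points}.card) : IsStarConfiguration B X := by
  have hcommon : ∀ p ∈ B.offDiag, {P ∈ X | P ∈ p.1.points ∧ P ∈ p.2.points}.card ≤ 1 := by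
    simp only [Finset.mem_offDiag, Finset.card_le_one, Finset.mem_filter]
    rintro ⟨L, M⟩ ⟨-, -, hne⟩ P ⟨-, hPL, hPM⟩ Q ⟨-, hQL, hQM⟩
    exact ProjLine.eq_of_mem_points hne hPL hPM hQL hQM
  refine ⟨card_filter_eq_two hB hX hL hcommon, fun L hLB M hMB hne ↦ ?_⟩
  have hcard := card_filter_and_eq_one hB hX hL hcommon (L, M)
    (Finset.mem_offDiag.mpr ⟨hLB, hMB, hne⟩)
  obtain ⟨P, hP⟩ := Finset.card_pos.mp (hcard ▸ one_pos)
  exact ⟨P, Finset.mem_filter.mp hP⟩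

namespace IsKConfig

variable {s : ℕ} {X : Set (P2 K)} {d : Fin s → ℕ} {Xs : Fin s → Set (P2 K)}
  {Ls : Fin s → ProjLine K}

theorem finite_part (hX : IsKConfig X d Xs Ls) (i : Fin s) : (Xs i).Finite :=
  Set.finite_of_ncard_pos (hX.card_eq i ▸ hX.one_le i)

theorem finite (hX : IsKConfig X d Xs Ls) : X.Finite :=
  hX.union_eq ▸ Set.finite_iUnion hX.finite_part

theorem ncard_eq_sum (hX : IsKConfig X d Xs Ls) : X.ncard = ∑ i, d i := by
  have hdisj {i j : Fin s} (h : j < i) : Disjoint (Xs i) (Xs j) :=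
    Set.disjoint_right.mpr fun P hPj hPi ↦ hX.not_mem i j h P hPj (hX.subset_line i hPi)
  have hpair : Pairwise (Function.onFun Disjoint Xs) := fun i j h ↦
    h.lt_or_gt.elim (fun h ↦ (hdisj h).symm) hdisj
  rw [hX.union_eq, Set.ncard_iUnion_of_finite hX.finite_part hpair, finsum_eq_sum_of_fintype]
  exact Finset.sum_congr rfl fun i _ ↦ hX.card_eq i

theorem two_mul_ncard (hX : IsKConfig X (fun i : Fin s ↦ i.1 + 1) Xs Ls) :
    2 * X.ncard = s * (s + 1) := by
  have hsucc : ∑ i ∈ Finset.range s, (i + 1) = ∑ i ∈ Finset.range (s + 1), i := by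
    rw [Finset.sum_range_succ', add_zero]
  rw [hX.ncard_eq_sum, Fin.sum_univ_eq_sum_range (· + 1), hsucc, mul_comm, mul_comm s]
  exact Finset.sum_range_id_mul_two (s + 1)

end IsKConfig

end KConfiguration

theorem kconfig_delta_splusone_general {K : Type} [Field K] [Infinite K] {s : ℕ} (hs : 2 ≤ s)
    {X : Set (P2 K)} (hX : X.Finite) (hXcard : 2 * X.ncard ≤ s * (s + 1)) {B : Finset (ProjLine K)}
    (hB : B.card = s + 1) (hL : ∀ L ∈ B, s ≤ (X ∩ L.points).ncard) (m : ℕ) (hm : 2 ≤ m) :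
    deltaHilb (fatIdeal X m) ((m : ℤ) * s - 1) = s + 1 := by
  classical
  lift X to Finset (P2 K) using hX
  rw [Set.ncard_coe_finset] at hXcard
  have hstar : IsStarConfiguration B X := .of_card_le hB hXcard fun L hLB ↦ by
    rw [← Set.ncard_coe_finset, Finset.coe_filter]
    exact hL L hLB
  exact hstar.deltaHilb_fatIdeal hB hs hm

/-- **Theorem (case `d_s = s`, exactly `s+1` lines).** Let `X` be a
k-configuration of type `(1,2,…,s)`, `s ≥ 2`, with exactly `s + 1` lines
containing exactly `s` points of `X`. Then `ΔH_{mX}(m·s − 1) = s + 1` for all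
`m ≥ 2`. -/
theorem kconfig_delta_splusone {K : Type} [Field K] [IsAlgClosed K] {s : ℕ} (hs : 2 ≤ s)
    (X : Set (P2 K)) (Xs : Fin s → Set (P2 K)) (Ls : Fin s → ProjLine K)
    (hX : IsKConfig X (fun i : Fin s => i.1 + 1) Xs Ls)
    (hfin : {L : ProjLine K | (X ∩ L.points).ncard = s}.Finite)
    (hcard : {L : ProjLine K | (X ∩ L.points).ncard = s}.ncard = s + 1) :
    ∀ m : ℕ, 2 ≤ m → deltaHilb (fatIdeal X m) ((m : ℤ) * s - 1) = s + 1 :=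
  kconfig_delta_splusone_general hs hX.finite hX.two_mul_ncard.le (B := hfin.toFinset)
    ((Set.ncard_eq_toFinset_card _ hfin).symm.trans hcard) fun _ hL ↦ (hfin.mem_toFinset.mp hL).ge
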